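/- Let γ=(B,M,S,A,Â) be a market with middlemen and v_γ the associated middlemen matching market game. Then there exists a buyer-optimal core allocation: a payoff vector x^B∈Core(v_γ) such that x^B_i = mc_i(v_γ) for every buyer i∈B, i.e. every buyer simultaneously attains her marginal contribution to the grand coalition. -/

import Mathlib

/-!
Matching markets with middlemen (Atay, Bahel, Solymosi).

Players are of three sorts: buyers `B`, middlemen `M`, sellers `S`
(three disjoint nonempty finite types); the player set is `Player B M S = B ⊕ M ⊕ S`.
An (functional representation of a) `T`-matching assigns to each buyer either nothing
(the buyer is single), a seller (direct trade), or a middleman together with a seller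
(mediated trade); distinct buyers get distinct sellers, and all agents involved lie in `T`.
A middleman may mediate several trades.
-/

open scoped Classical

noncomputable section

/-- The set of players of a market with middlemen: buyers `B`, middlemen `M`, sellers `S`. -/
abbrev Player (B M S : Type*) := B ⊕ M ⊕ S

/-- Functional representation of a matching in the market with middlemen: each buyer is
unmatched (`none`), matched directly to a seller (`some (none, k)`), or matched to a seller
through a middleman (`some (some j, k)`). -/
abbrev MMatch (B M S : Type*) := B → Option (Option M × S)

namespace Middlemen

variable {B M S : Type*}

/-- A buyer as a player. -/
def buyer (i : B) : Player B M S := Sum.inl i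

/-- A middleman as a player. -/
def mid (j : M) : Player B M S := Sum.inr (Sum.inl j)

/-- A seller as a player. -/
def seller (k : S) : Player B M S := Sum.inr (Sum.inr k)

/-- `f` is a `T`-matching in the market with middlemen: every basic coalition used by `f`
is contained in `T` and no seller is matched to two distinct buyers.  (Buyers, middlemen
and sellers of `T` not appearing in any trade are singletons of the matching.) -/
def IsMatching (T : Finset (Player B M S)) (f : MMatch B M S) : Prop :=
  (∀ i o k, f i = some (o, k) →
      buyer i ∈ T ∧ seller k ∈ T ∧ ∀ j, o = some j → mid j ∈ T) ∧
  (∀ i i' o o' k, f i = some (o, k) → f i' = some (o', k) → i = i')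

variable [Fintype B] [Fintype M] [Fintype S]

/-- The value `Σ_{(i,k)∈μ} a_{ik} + Σ_{(i,j,k)∈μ} â_{ijk}` of a matching in the market
with middlemen with direct-trade surplus matrix `A` and mediated-trade surpluses `Ah`. -/
def mval (A : B → S → ℝ) (Ah : B → M → S → ℝ) (f : MMatch B M S) : ℝ :=
  ∑ i, (match f i with
    | none => 0
    | some (none, k) => A i k
    | some (some j, k) => Ah i j k)

/-- The TU game `v_γ` associated with the market with middlemen `γ = (B,M,S,A,Ah)`:
the worth of a coalition `T` is the maximal value of a `T`-matching. -/
def vGame (A : B → S → ℝ) (Ah : B → M → S → ℝ) (T : Finset (Player B M S)) : ℝ :=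
  sSup { r | ∃ f : MMatch B M S, IsMatching T f ∧ r = mval A Ah f }

/-- `g` is a matching of the coalition `R` in a two-sided assignment market. -/
def IsMatching2 (R : Finset (B ⊕ S)) (g : B → Option S) : Prop :=
  (∀ i k, g i = some k → Sum.inl i ∈ R ∧ Sum.inr k ∈ R) ∧
  (∀ i i' k, g i = some k → g i' = some k → i = i')

/-- The value of a two-sided matching with valuation matrix `As`. -/
def m2val (As : B → S → ℝ) (g : B → Option S) : ℝ :=
  ∑ i, (match g i with
    | none => 0
    | some k => As i k)

/-- The assignment game `w_{γ*}` of the two-sided assignment market `(B,S,As)`. -/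
def wGame (As : B → S → ℝ) (R : Finset (B ⊕ S)) : ℝ :=
  sSup { r | ∃ g : B → Option S, IsMatching2 R g ∧ r = m2val As g }

/-- The matrix `A*` of the associated two-sided assignment market:
`a*_{ik} = max_{j ∈ M} â_{ijk}`. -/
def Astar [Nonempty M] (Ah : B → M → S → ℝ) (i : B) (k : S) : ℝ :=
  Finset.univ.sup' Finset.univ_nonempty fun j => Ah i j k

/-- The two-sided matching `μ*` induced by a matching `μ` of the market with middlemen:
keep all matched buyer–seller pairs (dropping the middlemen). -/
def star (f : MMatch B M S) : B → Option S := fun i => (f i).map Prod.snd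

/-- `m(i,k)`: the lowest-indexed middleman `j` maximizing `â_{ijk}`. -/
def bestMid [Nonempty M] [LinearOrder M] (Ah : B → M → S → ℝ) (i : B) (k : S) : M :=
  (Finset.univ.filter fun j => ∀ j' : M, Ah i j' k ≤ Ah i j k).min' (by
    obtain ⟨j, -, hj⟩ := Finset.exists_max_image (Finset.univ : Finset M)
      (fun j => Ah i j k) Finset.univ_nonempty
    exact ⟨j, Finset.mem_filter.mpr ⟨Finset.mem_univ _, fun j' => hj j' (Finset.mem_univ _)⟩⟩)

/-- The matching `σ^△` of the market with middlemen induced by a two-sided matching `σ`: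
each matched pair `{i,k}` of `σ` trades through the best middleman `m(i,k)`
(and every other middleman is a singleton). -/
def triangle [Nonempty M] [LinearOrder M] (Ah : B → M → S → ℝ) (g : B → Option S) :
    MMatch B M S :=
  fun i => (g i).map fun k => (some (bestMid Ah i k), k)

/-- The core of a TU game on the finite player set `P`. -/
def core {P : Type*} [Fintype P] (v : Finset P → ℝ) : Set (P → ℝ) :=
  { x | ∑ t, x t = v Finset.univ ∧ ∀ T : Finset P, v T ≤ ∑ t ∈ T, x t }

/-- Augment a payoff vector of the two-sided market with zero payoffs to all middlemen. -/
def aug (xz : B ⊕ S → ℝ) : Player B M S → ℝ := fun t =>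
  match t with
  | Sum.inl i => xz (Sum.inl i)
  | Sum.inr (Sum.inl _) => 0
  | Sum.inr (Sum.inr k) => xz (Sum.inr k)

/-- Restrict a payoff vector of the market with middlemen to the buyers and sellers. -/
def restrictBS (X : Player B M S → ℝ) : B ⊕ S → ℝ := fun t =>
  match t with
  | Sum.inl i => X (buyer i)
  | Sum.inr k => X (seller k)

/-- The set `T ∩ (B ∪ S)` of buyers and sellers of a coalition `T`. -/
def bsPart (T : Finset (Player B M S)) : Finset (B ⊕ S) :=
  Finset.univ.filter fun t =>
    match t with
    | Sum.inl i => buyer i ∈ T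
    | Sum.inr k => (seller k : Player B M S) ∈ T

/-- The coalition `R ∪ M` consisting of the buyers and sellers of `R` together with
all middlemen. -/
def withAllMid (R : Finset (B ⊕ S)) : Finset (Player B M S) :=
  Finset.univ.filter fun t =>
    match t with
    | Sum.inl i => Sum.inl i ∈ R
    | Sum.inr (Sum.inl _) => True
    | Sum.inr (Sum.inr k) => Sum.inr k ∈ R

end Middlemen

namespace Middlemen

/-!
Since a middleman may serve any number of trades, a coalition containing all middlemen is worth
as much as its buyers and sellers are in the two-sided assignment market in which each pair trades
through its best channel, and paying the middlemen nothing turns core allocations of the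
assignment game into core allocations of `v_γ`.

In the assignment game, give each buyer `i` her marginal contribution `x i` and each seller `k` the
least price `y k ≥ 0` with `a i k ≤ x i + y k` for all `i`. These payoffs are stable by
construction, and they are feasible because they satisfy complementary slackness with an optimal
matching. The latter is an exchange argument: if `μ` leaves the seller `k` idle and `ν` is optimal
without buyer `c`, then swapping `μ` and `ν` along the alternating path that starts at `c`, and
matching `c` with `k`, yields two matchings whose values add up to those of `μ` and `ν` plus
`a c k`.
-/

/-- The marginal contribution `mc_t(v)` of a player to the grand coalition of a TU game. -/
def marginalContribution {P : Type*} [Fintype P] [DecidableEq P] (v : Finset P → ℝ) (t : P) : ℝ :=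
  v Finset.univ - v (Finset.univ.erase t)

theorem sum_filterMap {α β γ : Type*} [AddCommMonoid γ] (s : Finset α) (g : α → Option β)
    (hg : ∀ a a' b, b ∈ g a → b ∈ g a' → a = a') (y : β → γ) :
    ∑ b ∈ s.filterMap g hg, y b = ∑ a ∈ s, (g a).elim 0 y := by
  have h_biUnion : s.filterMap g hg = s.biUnion fun a => (g a).toFinset := by
    ext b
    simp
  have h_disjoint : (s : Set α).PairwiseDisjoint fun a => (g a).toFinset := by
    intro a _ a' _ hne
    refine Finset.disjoint_left.2 fun b hb hb' => hne ?_
    exact hg a a' b (Option.mem_toFinset.1 hb) (Option.mem_toFinset.1 hb')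
  rw [h_biUnion, Finset.sum_biUnion h_disjoint]
  refine Finset.sum_congr rfl fun a _ => ?_
  cases g a <;> simp

section AssignmentMarket

variable {B S : Type*}

namespace IsMatching2

variable {R R' : Finset (B ⊕ S)} {g μ ν : B → Option S}

theorem mono (hg : IsMatching2 R g) (h : R ⊆ R') : IsMatching2 R' g :=
  ⟨fun i k hik => ⟨h (hg.1 i k hik).1, h (hg.1 i k hik).2⟩, hg.2⟩

theorem erase_buyer_iff {b : B} :
    IsMatching2 (R.erase (Sum.inl b)) g ↔ IsMatching2 R g ∧ g b = none := by
  refine ⟨fun hg => ⟨hg.mono (Finset.erase_subset _ _), ?_⟩, fun ⟨hg, hb⟩ => ⟨?_, hg.2⟩⟩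
  · exact Option.eq_none_iff_forall_ne_some.2 fun k hk => by simpa using (hg.1 b k hk).1
  · intro i k hik
    have hib : i ≠ b := by
      rintro rfl
      simp [hb] at hik
    simpa [hib] using hg.1 i k hik

theorem update_none (hg : IsMatching2 R g) (b : B) :
    IsMatching2 R (Function.update g b none) := by
  have h_le : ∀ i k, Function.update g b none i = some k → g i = some k := by
    intro i k h
    by_cases hi : i = b <;> simp_all
  exact ⟨fun i k h => hg.1 i k (h_le i k h),
    fun i i' k h h' => hg.2 i i' k (h_le i k h) (h_le i' k h')⟩

theorem update_some (hg : IsMatching2 R g) {c : B} {k : S} (hc : Sum.inl c ∈ R)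
    (hk : Sum.inr k ∈ R) (hk_idle : ∀ i, g i ≠ some k) :
    IsMatching2 R (Function.update g c (some k)) := by
  have h_cases : ∀ i s, Function.update g c (some k) i = some s →
      i = c ∧ s = k ∨ g i = some s ∧ s ≠ k := by
    intro i s h
    by_cases hi : i = c
    · subst hi
      exact Or.inl ⟨rfl, by simpa using h.symm⟩
    · rw [Function.update_of_ne hi] at h
      exact Or.inr ⟨h, fun hs => hk_idle i (hs ▸ h)⟩
  refine ⟨fun i s h => ?_, fun i i' s h h' => ?_⟩
  · rcases h_cases i s h with ⟨rfl, rfl⟩ | ⟨hi, -⟩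
    · exact ⟨hc, hk⟩
    · exact hg.1 i s hi
  · rcases h_cases i s h with ⟨rfl, rfl⟩ | ⟨hi, hs⟩ <;>
      rcases h_cases i' _ h' with ⟨rfl, hs'⟩ | ⟨hi', hs'⟩
    · rfl
    · exact absurd rfl hs'
    · exact absurd hs' hs
    · exact hg.2 i i' s hi hi'

theorem piecewise (hμ : IsMatching2 R μ) (hν : IsMatching2 R ν) {P : Set B}
    (h_cross : ∀ b ∈ P, ∀ d s, μ b = some s → ν d = some s → d ∈ P) :
    IsMatching2 R (P.piecewise μ ν) := by
  refine ⟨fun i k h => ?_, fun i i' k h h' => ?_⟩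
  · by_cases hi : i ∈ P
    · exact hμ.1 i k (by simpa [hi] using h)
    · exact hν.1 i k (by simpa [hi] using h)
  · by_cases hi : i ∈ P <;> by_cases hi' : i' ∈ P <;>
      simp only [hi, hi', Set.piecewise_eq_of_mem, Set.piecewise_eq_of_notMem,
        not_false_eq_true] at h h'
    · exact hμ.2 i i' k h h'
    · exact absurd (h_cross i hi i' k h h') hi'
    · exact absurd (h_cross i' hi' i k h' h) hi
    · exact hν.2 i i' k h h'

theorem sum_elim_le_sum_toRight (hg : IsMatching2 R g) {y : S → ℝ}
    (hy : ∀ k, (∀ i, g i ≠ some k) → 0 ≤ y k) :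
    ∑ i ∈ R.toLeft, (g i).elim 0 y ≤ ∑ k ∈ R.toRight, y k := by
  rw [← sum_filterMap _ g hg.2]
  refine Finset.sum_le_sum_of_subset_of_nonneg (fun k hk => ?_) fun k _ hk => hy k fun i hi => ?_
  · obtain ⟨i, -, hik⟩ := (Finset.mem_filterMap _).1 hk
    exact Finset.mem_toRight.2 (hg.1 i k hik).2
  · exact hk ((Finset.mem_filterMap _).2 ⟨i, Finset.mem_toLeft.2 (hg.1 i k hi).1, hi⟩)

end IsMatching2

/-- The buyers on the alternating path of `μ` and `ν` that starts at `c`: from a buyer `b` it moves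
to the `ν`-partner of the `μ`-partner of `b`. -/
def alternatingPath (μ ν : B → Option S) (c : B) : Set B :=
  {b | Relation.ReflTransGen (fun b d => ∃ s, μ b = some s ∧ ν d = some s) c b}

section AlternatingPath

variable {μ ν : B → Option S} {b c d : B} {s : S}

theorem self_mem_alternatingPath : c ∈ alternatingPath μ ν c :=
  Relation.ReflTransGen.refl

theorem mem_alternatingPath_of_mem (hb : b ∈ alternatingPath μ ν c) (hμ : μ b = some s)
    (hν : ν d = some s) : d ∈ alternatingPath μ ν c :=
  Relation.ReflTransGen.tail hb ⟨s, hμ, hν⟩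

theorem exists_pred_of_mem_alternatingPath (hc : ν c = none) (hd : d ∈ alternatingPath μ ν c)
    (hν : ν d = some s) : ∃ b ∈ alternatingPath μ ν c, μ b = some s := by
  rcases Relation.ReflTransGen.cases_tail hd with rfl | ⟨b, hb, t, hμt, hνt⟩
  · simp [hc] at hν
  · exact ⟨b, hb, by rw [hμt, ← hνt, hν]⟩

end AlternatingPath

section Value

variable [Fintype B]

theorem m2val_eq_sum_elim (a : B → S → ℝ) (g : B → Option S) :
    m2val a g = ∑ i, (g i).elim 0 (a i) := by
  refine Finset.sum_congr rfl fun i _ => ?_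
  cases g i <;> rfl

theorem m2val_neg (a : B → S → ℝ) (g : B → Option S) : m2val (-a) g = -m2val a g := by
  simp only [m2val_eq_sum_elim, ← Finset.sum_neg_distrib]
  refine Finset.sum_congr rfl fun i _ => ?_
  cases g i <;> simp

theorem m2val_update (a : B → S → ℝ) (g : B → Option S) (c : B) (o : Option S) :
    m2val a (Function.update g c o) + (g c).elim 0 (a c) = m2val a g + o.elim 0 (a c) := by
  simp only [m2val_eq_sum_elim, ← Finset.add_sum_erase _ _ (Finset.mem_univ c),
    Function.update_self]
  have h_rest : ∑ i ∈ Finset.univ.erase c, (Function.update g c o i).elim 0 (a i) =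
      ∑ i ∈ Finset.univ.erase c, (g i).elim 0 (a i) :=
    Finset.sum_congr rfl fun i hi => by rw [Function.update_of_ne (Finset.ne_of_mem_erase hi)]
  rw [h_rest]
  ring

theorem m2val_piecewise_add_piecewise (a : B → S → ℝ) (P : Set B) (μ ν : B → Option S) :
    m2val a (P.piecewise μ ν) + m2val a (P.piecewise ν μ) = m2val a μ + m2val a ν := by
  simp only [m2val_eq_sum_elim, ← Finset.sum_add_distrib]
  refine Finset.sum_congr rfl fun i _ => ?_
  by_cases hi : i ∈ P <;> simp [hi, add_comm]

namespace IsMatching2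

variable {R : Finset (B ⊕ S)} {g : B → Option S}

theorem m2val_eq_sum_toLeft (hg : IsMatching2 R g) (a : B → S → ℝ) :
    m2val a g = ∑ i ∈ R.toLeft, (g i).elim 0 (a i) := by
  rw [m2val_eq_sum_elim]
  refine (Finset.sum_subset (Finset.subset_univ _) fun i _ hi => ?_).symm
  have h_none : g i = none :=
    Option.eq_none_iff_forall_ne_some.2 fun k hk => hi (Finset.mem_toLeft.2 (hg.1 i k hk).1)
  rw [h_none, Option.elim_none]

theorem m2val_le_sum (hg : IsMatching2 R g) {a : B → S → ℝ} {z : B ⊕ S → ℝ}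
    (h_buyer : ∀ i, g i = none → 0 ≤ z (Sum.inl i))
    (h_seller : ∀ k, (∀ i, g i ≠ some k) → 0 ≤ z (Sum.inr k))
    (h_pair : ∀ i k, g i = some k → a i k ≤ z (Sum.inl i) + z (Sum.inr k)) :
    m2val a g ≤ ∑ t ∈ R, z t := by
  have h_pointwise : ∀ i, (g i).elim 0 (a i) ≤ z (Sum.inl i) + (g i).elim 0 (z ∘ Sum.inr) := by
    intro i
    cases hi : g i with
    | none => simpa using h_buyer i hi
    | some k => simpa using h_pair i k hi
  calc m2val a g
      = ∑ i ∈ R.toLeft, (g i).elim 0 (a i) := hg.m2val_eq_sum_toLeft a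
    _ ≤ ∑ i ∈ R.toLeft, (z (Sum.inl i) + (g i).elim 0 (z ∘ Sum.inr)) :=
        Finset.sum_le_sum fun i _ => h_pointwise i
    _ = ∑ i ∈ R.toLeft, z (Sum.inl i) + ∑ i ∈ R.toLeft, (g i).elim 0 (z ∘ Sum.inr) :=
        Finset.sum_add_distrib
    _ ≤ ∑ i ∈ R.toLeft, z (Sum.inl i) + ∑ k ∈ R.toRight, z (Sum.inr k) := by
        gcongr
        exact hg.sum_elim_le_sum_toRight h_seller
    _ = ∑ t ∈ R, z t := (Finset.sum_sum_eq_sum_toLeft_add_sum_toRight R z).symm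

theorem sum_le_m2val (hg : IsMatching2 R g) {a : B → S → ℝ} {z : B ⊕ S → ℝ}
    (h_buyer : ∀ i, g i = none → z (Sum.inl i) ≤ 0)
    (h_seller : ∀ k, (∀ i, g i ≠ some k) → z (Sum.inr k) ≤ 0)
    (h_pair : ∀ i k, g i = some k → z (Sum.inl i) + z (Sum.inr k) ≤ a i k) :
    ∑ t ∈ R, z t ≤ m2val a g := by
  have h_neg : m2val (-a) g ≤ ∑ t ∈ R, (-z) t := hg.m2val_le_sum
    (fun i hi => by simpa using h_buyer i hi)
    (fun k hk => by simpa using h_seller k hk)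
    (fun i k hik => by simpa [add_comm] using h_pair i k hik)
  simpa [m2val_neg] using h_neg

end IsMatching2

theorem IsMatching2.exists_exchange {R : Finset (B ⊕ S)} {μ ν : B → Option S}
    (hμ : IsMatching2 R μ) (hν : IsMatching2 R ν) {c : B} {k : S} (hcR : Sum.inl c ∈ R)
    (hkR : Sum.inr k ∈ R) (hc : ν c = none) (hk : ∀ i, μ i ≠ some k) (a : B → S → ℝ) :
    ∃ p q, IsMatching2 R p ∧ IsMatching2 R q ∧
      m2val a p + m2val a q = m2val a μ + m2val a ν + a c k ∧
      ∀ i, μ i = none → p i = none ∨ q i = none := by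
  set P := alternatingPath μ ν c
  have hcP : c ∈ P := self_mem_alternatingPath
  have hq : IsMatching2 R (P.piecewise μ ν) :=
    hμ.piecewise hν fun _ hb _ _ => mem_alternatingPath_of_mem hb
  have hp₀ : IsMatching2 R (P.piecewise ν μ) := by
    refine hν.piecewise hμ fun b hb d s hbs hds => ?_
    obtain ⟨b', hb', hbs'⟩ := exists_pred_of_mem_alternatingPath hc hb hbs
    exact hμ.2 d b' s hds hbs' ▸ hb'
  have hk_idle : ∀ i, P.piecewise ν μ i ≠ some k := by
    intro i hik
    by_cases hi : i ∈ P
    · obtain ⟨b, -, hb⟩ :=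
        exists_pred_of_mem_alternatingPath hc hi (by simpa [hi] using hik)
      exact hk b hb
    · exact hk i (by simpa [hi] using hik)
  refine ⟨Function.update (P.piecewise ν μ) c (some k), P.piecewise μ ν,
    hp₀.update_some hcR hkR hk_idle, hq, ?_, fun i hi => ?_⟩
  · have h_update := m2val_update a (P.piecewise ν μ) c (some k)
    have h_swap := m2val_piecewise_add_piecewise a P μ ν
    simp only [Set.piecewise_eq_of_mem P ν μ hcP, hc, Option.elim_none, Option.elim_some]
      at h_update
    linarith
  · by_cases hiP : i ∈ P
    · exact Or.inr (by simpa [hiP] using hi)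
    · have hic : i ≠ c := fun h => hiP (h ▸ hcP)
      exact Or.inl (by simpa [hiP, hic] using hi)

end Value

section Worth

variable [Fintype B] [Finite S]

theorem isGreatest_wGame (a : B → S → ℝ) (R : Finset (B ⊕ S)) :
    IsGreatest {r | ∃ g, IsMatching2 R g ∧ r = m2val a g} (wGame a R) := by
  have h_finite : {r | ∃ g, IsMatching2 R g ∧ r = m2val a g}.Finite :=
    (Set.finite_range (m2val a)).subset fun _ ⟨g, _, hr⟩ => ⟨g, hr.symm⟩
  exact h_finite.isCompact.isGreatest_sSup ⟨_, fun _ => none, by simp [IsMatching2], rfl⟩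

theorem IsMatching2.m2val_le_wGame {R : Finset (B ⊕ S)} {g : B → Option S}
    (hg : IsMatching2 R g) (a : B → S → ℝ) : m2val a g ≤ wGame a R :=
  (isGreatest_wGame a R).2 ⟨g, hg, rfl⟩

theorem exists_isMatching2_m2val_eq_wGame (a : B → S → ℝ) (R : Finset (B ⊕ S)) :
    ∃ g, IsMatching2 R g ∧ m2val a g = wGame a R :=
  let ⟨g, hg, h⟩ := (isGreatest_wGame a R).1
  ⟨g, hg, h.symm⟩

theorem wGame_mono (a : B → S → ℝ) : Monotone (wGame a) := by
  intro R R' h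
  obtain ⟨g, hg, hgR⟩ := exists_isMatching2_m2val_eq_wGame a R
  exact hgR ▸ (hg.mono h).m2val_le_wGame a

section ExchangeInequalities

variable {R : Finset (B ⊕ S)} {μ : B → Option S} {c : B} {k : S}

theorem IsMatching2.m2val_add_wGame_erase_add_le_two_mul (hμ : IsMatching2 R μ)
    (hcR : Sum.inl c ∈ R) (hkR : Sum.inr k ∈ R) (hk : ∀ i, μ i ≠ some k) (a : B → S → ℝ) :
    m2val a μ + wGame a (R.erase (Sum.inl c)) + a c k ≤ 2 * wGame a R := by
  obtain ⟨ν, hν, hν_opt⟩ := exists_isMatching2_m2val_eq_wGame a (R.erase (Sum.inl c))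
  obtain ⟨hν, hνc⟩ := IsMatching2.erase_buyer_iff.1 hν
  obtain ⟨p, q, hp, hq, h_value, -⟩ := hμ.exists_exchange hν hcR hkR hνc hk a
  linarith [hp.m2val_le_wGame a, hq.m2val_le_wGame a]

theorem IsMatching2.m2val_add_wGame_erase_add_le {i : B}
    (hμ : IsMatching2 (R.erase (Sum.inl i)) μ) (hcR : Sum.inl c ∈ R) (hkR : Sum.inr k ∈ R)
    (hk : ∀ i, μ i ≠ some k) (a : B → S → ℝ) :
    m2val a μ + wGame a (R.erase (Sum.inl c)) + a c k ≤
      wGame a R + wGame a (R.erase (Sum.inl i)) := by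
  obtain ⟨ν, hν, hν_opt⟩ := exists_isMatching2_m2val_eq_wGame a (R.erase (Sum.inl c))
  obtain ⟨hν, hνc⟩ := IsMatching2.erase_buyer_iff.1 hν
  obtain ⟨hμ, hμi⟩ := IsMatching2.erase_buyer_iff.1 hμ
  obtain ⟨p, q, hp, hq, h_value, h_none⟩ := hμ.exists_exchange hν hcR hkR hνc hk a
  rcases h_none i hμi with hpi | hqi
  · linarith [(IsMatching2.erase_buyer_iff.2 ⟨hp, hpi⟩).m2val_le_wGame a, hq.m2val_le_wGame a]
  · linarith [(IsMatching2.erase_buyer_iff.2 ⟨hq, hqi⟩).m2val_le_wGame a, hp.m2val_le_wGame a]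

end ExchangeInequalities

end Worth

/-- The least nonnegative payoff of seller `k` at which no pair `{i, k}` can improve on the buyer
payoffs `x`. The index `none : Option B` contributes the lower bound `0`. -/
def leastStablePrice [Fintype B] (a : B → S → ℝ) (x : B → ℝ) (k : S) : ℝ :=
  Finset.univ.sup' Finset.univ_nonempty fun o : Option B => o.elim 0 fun i => a i k - x i

theorem leastStablePrice_le_iff [Fintype B] {a : B → S → ℝ} {x : B → ℝ} {k : S} {r : ℝ} :
    leastStablePrice a x k ≤ r ↔ 0 ≤ r ∧ ∀ i, a i k - x i ≤ r := by
  simp [leastStablePrice, Finset.sup'_le_iff, Option.forall]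

section BuyerOptimal

variable [Fintype B] [Fintype S]

theorem marginalContribution_wGame_nonneg (a : B → S → ℝ) (t : B ⊕ S) :
    0 ≤ marginalContribution (wGame a) t :=
  sub_nonneg.2 (wGame_mono a (Finset.erase_subset _ _))

theorem mem_core_wGame {a : B → S → ℝ} {z : B ⊕ S → ℝ} (h_nonneg : ∀ t, 0 ≤ z t)
    (h_pair : ∀ i k, a i k ≤ z (Sum.inl i) + z (Sum.inr k))
    (h_feasible : ∑ t, z t ≤ wGame a Finset.univ) : z ∈ core (wGame a) := by
  have h_stable : ∀ R, wGame a R ≤ ∑ t ∈ R, z t := by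
    intro R
    obtain ⟨g, hg, hg_opt⟩ := exists_isMatching2_m2val_eq_wGame a R
    exact hg_opt ▸ hg.m2val_le_sum (fun i _ => h_nonneg _) (fun k _ => h_nonneg _)
      (fun i k _ => h_pair i k)
  exact ⟨h_feasible.antisymm (h_stable Finset.univ), h_stable⟩

/-- The buyer-optimal allocation of the assignment game: buyers receive their marginal
contributions, sellers the least prices that are stable against these. -/
def buyerOptimalPayoff (a : B → S → ℝ) : B ⊕ S → ℝ :=
  Sum.elim (fun i => marginalContribution (wGame a) (Sum.inl i))
    (leastStablePrice a fun i => marginalContribution (wGame a) (Sum.inl i))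

section ComplementarySlackness

variable {a : B → S → ℝ} {μ : B → Option S}

theorem buyerOptimalPayoff_buyer_nonpos (hμ : IsMatching2 Finset.univ μ)
    (h_opt : m2val a μ = wGame a Finset.univ) {i : B} (hi : μ i = none) :
    buyerOptimalPayoff a (Sum.inl i) ≤ 0 := by
  have h_le := (IsMatching2.erase_buyer_iff.2 ⟨hμ, hi⟩).m2val_le_wGame a
  exact sub_nonpos.2 (h_opt ▸ h_le)

theorem buyerOptimalPayoff_seller_nonpos (hμ : IsMatching2 Finset.univ μ)
    (h_opt : m2val a μ = wGame a Finset.univ) {k : S} (hk : ∀ i, μ i ≠ some k) :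
    buyerOptimalPayoff a (Sum.inr k) ≤ 0 := by
  refine leastStablePrice_le_iff.2 ⟨le_rfl, fun c => ?_⟩
  have h_exchange := hμ.m2val_add_wGame_erase_add_le_two_mul
    (Finset.mem_univ (Sum.inl c)) (Finset.mem_univ _) hk a
  simp only [marginalContribution]
  linarith

theorem buyerOptimalPayoff_pair_le (hμ : IsMatching2 Finset.univ μ)
    (h_opt : m2val a μ = wGame a Finset.univ) {i : B} {k : S} (hik : μ i = some k) :
    buyerOptimalPayoff a (Sum.inl i) + buyerOptimalPayoff a (Sum.inr k) ≤ a i k := by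
  have hμ' : IsMatching2 (Finset.univ.erase (Sum.inl i)) (Function.update μ i none) :=
    IsMatching2.erase_buyer_iff.2 ⟨hμ.update_none i, Function.update_self ..⟩
  have hk_idle : ∀ b, Function.update μ i none b ≠ some k := by
    intro b hb
    by_cases hbi : b = i
    · simp [hbi] at hb
    · exact hbi (hμ.2 b i k (by simpa [hbi] using hb) hik)
  have h_value : m2val a (Function.update μ i none) + a i k = m2val a μ := by
    simpa [hik] using m2val_update a μ i none
  suffices h : buyerOptimalPayoff a (Sum.inr k) ≤
      a i k - marginalContribution (wGame a) (Sum.inl i) from le_sub_iff_add_le'.1 h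
  refine leastStablePrice_le_iff.2 ⟨?_, fun c => ?_⟩ <;> simp only [marginalContribution]
  · linarith [hμ'.m2val_le_wGame a]
  · linarith [hμ'.m2val_add_wGame_erase_add_le
      (Finset.mem_univ (Sum.inl c)) (Finset.mem_univ _) hk_idle a]

end ComplementarySlackness

theorem buyerOptimalPayoff_mem_core (a : B → S → ℝ) :
    buyerOptimalPayoff a ∈ core (wGame a) := by
  have h_price := fun k => leastStablePrice_le_iff.1
    (le_refl (leastStablePrice a (fun i => marginalContribution (wGame a) (Sum.inl i)) k))
  obtain ⟨μ, hμ, h_opt⟩ := exists_isMatching2_m2val_eq_wGame a Finset.univ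
  refine mem_core_wGame ?_ (fun i k => sub_le_iff_le_add'.1 ((h_price k).2 i)) ?_
  · rintro (i | k)
    · exact marginalContribution_wGame_nonneg a _
    · exact (h_price k).1
  · exact h_opt ▸ hμ.sum_le_m2val
      (fun _ => buyerOptimalPayoff_buyer_nonpos hμ h_opt)
      (fun _ => buyerOptimalPayoff_seller_nonpos hμ h_opt)
      (fun _ _ => buyerOptimalPayoff_pair_le hμ h_opt)

end BuyerOptimal

end AssignmentMarket

section MiddlemenMarket

variable {B M S : Type*} (A : B → S → ℝ) (Ah : B → M → S → ℝ)

/-- The surplus of a trade between `i` and `k`, direct if `o = none` and through the middleman `j`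
if `o = some j`. -/
def channelSurplus (i : B) (k : S) (o : Option M) : ℝ :=
  o.elim (A i k) fun j => Ah i j k

theorem star_eq_some_iff {f : MMatch B M S} {i : B} {k : S} :
    star f i = some k ↔ ∃ o, f i = some (o, k) := by
  simp [star]

theorem mval_eq_sum_elim [Fintype B] (f : MMatch B M S) :
    mval A Ah f = ∑ i, (f i).elim 0 fun e => channelSurplus A Ah i e.2 e.1 := by
  refine Finset.sum_congr rfl fun i _ => ?_
  rcases f i with _ | ⟨_ | j, k⟩ <;> rfl

theorem isGreatest_vGame [Fintype B] [Finite M] [Finite S] (T : Finset (Player B M S)) :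
    IsGreatest {r | ∃ f, IsMatching T f ∧ r = mval A Ah f} (vGame A Ah T) := by
  have h_finite : {r | ∃ f, IsMatching T f ∧ r = mval A Ah f}.Finite :=
    (Set.finite_range (mval A Ah)).subset fun _ ⟨f, _, hr⟩ => ⟨f, hr.symm⟩
  exact h_finite.isCompact.isGreatest_sSup ⟨_, fun _ => none, by simp [IsMatching], rfl⟩

section BestSurplus

variable [Fintype M]

/-- The largest surplus that `i` and `k` can generate when all middlemen are available. Direct
trade is one of the channels, so this is `Astar Ah` when mediation never lowers the surplus. -/
def bestSurplus (i : B) (k : S) : ℝ :=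
  Finset.univ.sup' Finset.univ_nonempty (channelSurplus A Ah i k)

theorem channelSurplus_le_bestSurplus (i : B) (k : S) (o : Option M) :
    channelSurplus A Ah i k o ≤ bestSurplus A Ah i k :=
  Finset.le_sup' _ (Finset.mem_univ o)

theorem exists_channelSurplus_eq_bestSurplus (i : B) (k : S) :
    ∃ o, channelSurplus A Ah i k o = bestSurplus A Ah i k :=
  let ⟨o, _, ho⟩ := Finset.exists_mem_eq_sup' Finset.univ_nonempty (channelSurplus A Ah i k)
  ⟨o, ho.symm⟩

theorem mval_le_m2val_star [Fintype B] (f : MMatch B M S) :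
    mval A Ah f ≤ m2val (bestSurplus A Ah) (star f) := by
  rw [mval_eq_sum_elim, m2val_eq_sum_elim]
  refine Finset.sum_le_sum fun i _ => ?_
  rcases hi : f i with _ | ⟨o, k⟩
  · simp [star, hi]
  · simpa [star, hi] using channelSurplus_le_bestSurplus A Ah i k o

theorem exists_star_eq_and_mval_eq [Fintype B] (g : B → Option S) :
    ∃ f : MMatch B M S, star f = g ∧ mval A Ah f = m2val (bestSurplus A Ah) g := by
  choose o ho using exists_channelSurplus_eq_bestSurplus A Ah
  refine ⟨fun i => (g i).map fun k => (o i k, k), ?_, ?_⟩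
  · funext i
    simp [star, Function.comp_def]
  · rw [mval_eq_sum_elim, m2val_eq_sum_elim]
    refine Finset.sum_congr rfl fun i _ => ?_
    cases g i <;> simp [ho]

end BestSurplus

section BuyersAndSellers

variable [Fintype B] [Fintype S]

theorem mem_bsPart_inl {T : Finset (Player B M S)} {i : B} :
    Sum.inl i ∈ bsPart T ↔ buyer i ∈ T := by
  simp [bsPart]

theorem mem_bsPart_inr {T : Finset (Player B M S)} {k : S} :
    Sum.inr k ∈ bsPart T ↔ seller k ∈ T := by
  simp [bsPart]

theorem IsMatching.star {T : Finset (Player B M S)} {f : MMatch B M S} (hf : IsMatching T f) :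
    IsMatching2 (bsPart T) (star f) := by
  refine ⟨fun i k hik => ?_, fun i i' k hik hik' => ?_⟩
  · obtain ⟨o, ho⟩ := star_eq_some_iff.1 hik
    exact ⟨mem_bsPart_inl.2 (hf.1 i o k ho).1, mem_bsPart_inr.2 (hf.1 i o k ho).2.1⟩
  · obtain ⟨o, ho⟩ := star_eq_some_iff.1 hik
    obtain ⟨o', ho'⟩ := star_eq_some_iff.1 hik'
    exact hf.2 i i' o o' k ho ho'

theorem isMatching_of_star {T : Finset (Player B M S)} (hT : ∀ j, mid j ∈ T) {f : MMatch B M S}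
    (hf : IsMatching2 (bsPart T) (star f)) : IsMatching T f := by
  refine ⟨fun i o k hik => ?_, fun i i' o o' k hik hik' => ?_⟩
  · obtain ⟨hi, hk⟩ := hf.1 i k (star_eq_some_iff.2 ⟨o, hik⟩)
    exact ⟨mem_bsPart_inl.1 hi, mem_bsPart_inr.1 hk, fun j _ => hT j⟩
  · exact hf.2 i i' k (star_eq_some_iff.2 ⟨o, hik⟩) (star_eq_some_iff.2 ⟨o', hik'⟩)

theorem bsPart_univ [Fintype M] : bsPart (Finset.univ : Finset (Player B M S)) = Finset.univ := by
  ext (i | k) <;> simp [mem_bsPart_inl, mem_bsPart_inr]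

theorem bsPart_erase_buyer (T : Finset (Player B M S)) (i : B) :
    bsPart (T.erase (buyer i)) = (bsPart T).erase (Sum.inl i) := by
  ext (i' | k) <;> simp [mem_bsPart_inl, mem_bsPart_inr, buyer, seller]

theorem sum_aug (z : B ⊕ S → ℝ) (T : Finset (Player B M S)) :
    ∑ t ∈ T, aug z t = ∑ t ∈ bsPart T, z t := by
  have h_left : (bsPart T).toLeft = T.toLeft := by
    ext i
    simp [mem_bsPart_inl, buyer]
  have h_right : (bsPart T).toRight = T.toRight.toRight := by
    ext k
    simp [mem_bsPart_inr, seller]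
  simp [Finset.sum_sum_eq_sum_toLeft_add_sum_toRight, h_left, h_right, aug]

end BuyersAndSellers

variable [Fintype B] [Fintype M] [Fintype S]

theorem vGame_le_wGame_bsPart (T : Finset (Player B M S)) :
    vGame A Ah T ≤ wGame (bestSurplus A Ah) (bsPart T) := by
  obtain ⟨f, hf, h_opt⟩ := (isGreatest_vGame A Ah T).1
  calc vGame A Ah T = mval A Ah f := h_opt
    _ ≤ m2val (bestSurplus A Ah) (star f) := mval_le_m2val_star A Ah f
    _ ≤ wGame (bestSurplus A Ah) (bsPart T) := hf.star.m2val_le_wGame _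

theorem vGame_eq_wGame_bsPart {T : Finset (Player B M S)} (hT : ∀ j, mid j ∈ T) :
    vGame A Ah T = wGame (bestSurplus A Ah) (bsPart T) := by
  refine (vGame_le_wGame_bsPart A Ah T).antisymm ?_
  obtain ⟨g, hg, h_opt⟩ := exists_isMatching2_m2val_eq_wGame (bestSurplus A Ah) (bsPart T)
  obtain ⟨f, rfl, hf⟩ := exists_star_eq_and_mval_eq A Ah g
  rw [← h_opt, ← hf]
  exact (isGreatest_vGame A Ah T).2 ⟨f, isMatching_of_star hT hg, rfl⟩

theorem marginalContribution_vGame_buyer (i : B) :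
    marginalContribution (vGame A Ah) (buyer i) =
      marginalContribution (wGame (bestSurplus A Ah)) (Sum.inl i) := by
  have h_mid : ∀ j, mid j ∈ (Finset.univ : Finset (Player B M S)).erase (buyer i) := by
    simp [mid, buyer]
  rw [marginalContribution, marginalContribution, vGame_eq_wGame_bsPart A Ah h_mid,
    vGame_eq_wGame_bsPart A Ah fun _ => Finset.mem_univ _, bsPart_erase_buyer, bsPart_univ]

theorem aug_mem_core {z : B ⊕ S → ℝ} (hz : z ∈ core (wGame (bestSurplus A Ah))) :
    aug z ∈ core (vGame A Ah) := by
  refine ⟨?_, fun T => ?_⟩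
  · rw [sum_aug, vGame_eq_wGame_bsPart A Ah fun _ => Finset.mem_univ _, bsPart_univ]
    exact hz.1
  · rw [sum_aug]
    exact (vGame_le_wGame_bsPart A Ah T).trans (hz.2 _)

theorem exists_buyer_optimal_core_general :
    ∃ x ∈ core (vGame A Ah), ∀ i : B,
      x (buyer i) = marginalContribution (vGame A Ah) (buyer i) :=
  ⟨aug (buyerOptimalPayoff (bestSurplus A Ah)),
    aug_mem_core A Ah (buyerOptimalPayoff_mem_core _),
    fun i => (marginalContribution_vGame_buyer A Ah i).symm⟩

end MiddlemenMarket

/-- there exists a buyer-optimal core allocation of `v_γ`, at which every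
buyer attains her marginal contribution to the grand coalition. -/
theorem exists_buyer_optimal_core
    {B M S : Type*} [Fintype B] [Fintype M] [Fintype S]
    [Nonempty B] [Nonempty M] [Nonempty S]
    (A : B → S → ℝ) (Ah : B → M → S → ℝ)
    (hA : ∀ i k, 0 ≤ A i k) (hAh : ∀ i j k, A i k ≤ Ah i j k) :
    ∃ x ∈ core (vGame A Ah), ∀ i : B,
      x (buyer i) = vGame A Ah Finset.univ - vGame A Ah (Finset.univ.erase (buyer i)) :=
  exists_buyer_optimal_core_general A Ah

end Middlemen
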